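/- arXiv:2311.08882 — 3 statements merged into one kernel-verified Lean document; each statement's English description precedes it below -/
import Mathlib

section
/- Front-door adjustment (classical case of the front-door identifiability proposition): in the classical front-door model, for all x : X and y : Y, P_do(y|x) = ∑_z (P_XZ(x,z)/P_X(x)) * ∑_{x'} (P_XZY(x',z,y)/P_XZ(x',z)) * P_X(x'). In particular, the interventional distribution of Y under setting X to x is computable from the observational joint distribution alone. -/
open Finset

/-- Front-door adjustment (classical case): in the classical front-door
model, for all `x : X` and `y : Y`,
`P_do(y|x) = ∑ z, (P_XZ(x,z)/P_X(x)) * ∑ x', (P_XZY(x',z,y)/P_XZ(x',z)) * P_X(x')`.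
In particular, the interventional distribution of `Y` under setting `X` to `x` is
computable from the observational joint distribution alone. -/
theorem frontdoor_adjustment
    (U X Z Y : Type) [Fintype U] [Fintype X] [Fintype Z] [Fintype Y]
    [Nonempty U] [Nonempty X] [Nonempty Z] [Nonempty Y]
    (p : U → ℝ) (q : U → X → ℝ) (r : X → Z → ℝ) (s : Z → U → Y → ℝ)
    (hp : ∀ u, 0 < p u) (hp1 : ∑ u, p u = 1)
    (hq : ∀ u x, 0 < q u x) (hq1 : ∀ u, ∑ x, q u x = 1)
    (hr : ∀ x z, 0 < r x z) (hr1 : ∀ x, ∑ z, r x z = 1)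
    (hs : ∀ z u y, 0 < s z u y) (hs1 : ∀ z u, ∑ y, s z u y = 1)
    (P : U → X → Z → Y → ℝ)
    (hP : ∀ u x z y, P u x z y = p u * q u x * r x z * s z u y)
    (PX : X → ℝ) (hPX : ∀ x, PX x = ∑ u, ∑ z, ∑ y, P u x z y)
    (PXZ : X → Z → ℝ) (hPXZ : ∀ x z, PXZ x z = ∑ u, ∑ y, P u x z y)
    (PXZY : X → Z → Y → ℝ) (hPXZY : ∀ x z y, PXZY x z y = ∑ u, P u x z y)
    (Pdo : X → Y → ℝ)
    (hPdo : ∀ x y, Pdo x y = ∑ u, ∑ z, p u * r x z * s z u y) :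
    ∀ (x : X) (y : Y),
      Pdo x y =
        ∑ z, (PXZ x z / PX x) * ∑ x', (PXZY x' z y / PXZ x' z) * PX x' := by
  intro x y
  have hX : ∀ x, PX x = ∑ u, p u * q u x := by
    intro x
    rw [hPX]
    refine Finset.sum_congr rfl fun u _ => ?_
    simp only [hP, ← Finset.mul_sum, hs1, hr1, mul_one]
  have hXZ : ∀ x z, PXZ x z = PX x * r x z := by
    intro x z
    rw [hPXZ, hX, Finset.sum_mul]
    refine Finset.sum_congr rfl fun u _ => ?_
    simp only [hP, ← Finset.mul_sum, hs1, mul_one]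
  have hpos : ∀ x, PX x ≠ 0 := by
    intro x
    rw [hX]
    exact (Finset.sum_pos (fun u _ => mul_pos (hp u) (hq u x)) Finset.univ_nonempty).ne'
  have h1 : ∀ z, PXZ x z / PX x = r x z := by
    intro z
    rw [hXZ, mul_div_cancel_left₀ _ (hpos x)]
  have h2 : ∀ z x', PXZY x' z y / PXZ x' z * PX x' = ∑ u, p u * q u x' * s z u y := by
    intro z x'
    have e : PXZY x' z y = r x' z * ∑ u, p u * q u x' * s z u y := by
      rw [hPXZY, Finset.mul_sum]
      refine Finset.sum_congr rfl fun u _ => ?_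
      rw [hP]; ring
    have h3 := hpos x'
    have h4 := (hr x' z).ne'
    rw [e, hXZ]
    field_simp
  rw [hPdo, Finset.sum_comm]
  refine Finset.sum_congr rfl fun z _ => ?_
  simp only [h1, h2]
  rw [Finset.sum_comm, Finset.mul_sum]
  refine Finset.sum_congr rfl fun u _ => ?_
  rw [← Finset.sum_mul, ← Finset.mul_sum, hq1]
  ring
end

section
/- Local process tomography (the paper's proposition, case of CPM): if two ℂ-linear maps Φ, Ψ : Matrix (Fin n × Fin m) (Fin n × Fin m) ℂ →ₗ[ℂ] Matrix (Fin p × Fin q) (Fin p × Fin q) ℂ satisfy Tr[(|v⟩⟨v| ⊗ₖ |w⟩⟨w|) * Φ(ρ ⊗ₖ σ)] = Tr[(|v⟩⟨v| ⊗ₖ |w⟩⟨w|) * Ψ(ρ ⊗ₖ σ)] for all density matrices ρ on ℂ^n and σ on ℂ^m and all unit vectors v : Fin p → ℂ and w : Fin q → ℂ, then Φ = Ψ; that is, a process on a bipartite system is determined by its generalized matrix elements with respect to product states and product effects. -/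
open Matrix Kronecker ComplexOrder

theorem lpt_aux {n : ℕ} (f : Matrix (Fin n) (Fin n) ℂ → ℂ) (hf : IsLinearMap ℂ f)
    (h : ∀ v : Fin n → ℂ, (∑ i, ‖v i‖ ^ 2 = 1) → f (vecMulVec v (star v)) = 0)
    (A : Matrix (Fin n) (Fin n) ℂ) : f A = 0 := by
  have h1 : ∀ v : Fin n → ℂ, f (vecMulVec v (star v)) = 0 := by
    intro v
    by_cases hv : v = 0
    · subst hv
      have : vecMulVec (0 : Fin n → ℂ) (star (0 : Fin n → ℂ)) = 0 := by simp
      rw [this, hf.map_zero]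
    · set s : ℝ := ∑ i, ‖v i‖ ^ 2 with hs
      have hs0 : 0 < s := by
        obtain ⟨i, hi⟩ := Function.ne_iff.mp hv
        refine Finset.sum_pos' (fun i _ => by positivity) ⟨i, Finset.mem_univ _, ?_⟩
        have : 0 < ‖v i‖ := norm_pos_iff.mpr hi
        positivity
      set r : ℝ := Real.sqrt s with hr
      have hr0 : 0 < r := Real.sqrt_pos.mpr hs0
      have hrs : r ^ 2 = s := Real.sq_sqrt hs0.le
      have key := h (fun i => ((r⁻¹ : ℝ) : ℂ) * v i) (by
        simp only [norm_mul, mul_pow, ← Finset.mul_sum, ← hs, Complex.norm_real, norm_inv,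
          Real.norm_eq_abs, abs_of_pos hr0, inv_pow, hrs]
        exact inv_mul_cancel₀ hs0.ne')
      have e : vecMulVec v (star v) = ((r : ℂ) ^ 2) •
          vecMulVec (fun i => ((r⁻¹ : ℝ) : ℂ) * v i) (star (fun i => ((r⁻¹ : ℝ) : ℂ) * v i)) := by
        have : (r : ℂ) ≠ 0 := by exact_mod_cast hr0.ne'
        ext i j
        simp [vecMulVec_apply]
        field_simp
      rw [e, hf.map_smul, key, smul_zero]
  have hE : ∀ i j, f (single i j 1) = 0 := by
    intro i j
    have hd : ∀ i, f (single i i 1) = 0 := by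
      intro i
      have := h1 (Pi.single i 1)
      rwa [show vecMulVec (Pi.single i (1 : ℂ)) (star (Pi.single i 1)) = single i i 1 by
        ext a b
        simp [vecMulVec_apply, single_apply, Pi.single_apply]
        grind] at this
    have hc : ∀ c : ℂ, star c * f (single i j 1) + c * f (single j i 1) = 0 := by
      intro c
      have := h1 (Pi.single i 1 + c • Pi.single j 1)
      have e : vecMulVec (Pi.single i (1 : ℂ) + c • Pi.single j 1)
          (star (Pi.single i (1 : ℂ) + c • Pi.single j 1)) =
          single i i 1 + (c * star c) • single j j 1 + star c • single i j 1
            + c • single j i 1 := by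
        have hs : ∀ k : Fin n, star (Pi.single k (1 : ℂ) : Fin n → ℂ) = Pi.single k 1 := by
          intro k; ext a; by_cases hk : a = k <;> simp [Pi.single_apply, hk]
        have hv : ∀ k l : Fin n, vecMulVec (Pi.single k (1 : ℂ)) (Pi.single l 1)
            = single k l 1 := by
          intro k l; ext a b
          simp [vecMulVec_apply, single_apply, Pi.single_apply]
          grind
        simp only [star_add, star_smul, hs, add_vecMulVec, vecMulVec_add, smul_vecMulVec,
          vecMulVec_smul, hv]
        module
      rw [e, hf.map_add, hf.map_add, hf.map_add, hf.map_smul, hf.map_smul, hf.map_smul,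
        hd, hd] at this
      simpa using this
    have a := hc 1
    have b := hc Complex.I
    simp at a b
    have I2 := Complex.I_mul_I
    linear_combination a / 2 + Complex.I * b / 2 + (f (single i j 1) - f (single j i 1)) / 2 * I2
  have : hf.mk' f = 0 := by
    refine Matrix.ext_linearMap ℂ fun i j => LinearMap.ext_ring ?_
    simpa using hE i j
  exact congrArg (fun g => g A) this

theorem lpt_dm {n : ℕ} (v : Fin n → ℂ) (hv : ∑ i, ‖v i‖ ^ 2 = 1) :
    (vecMulVec v (star v)).PosSemidef ∧ (vecMulVec v (star v)).trace = 1 := by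
  refine ⟨posSemidef_vecMulVec_self_star v, ?_⟩
  simp only [trace, diag, vecMulVec_apply, Pi.star_apply, RCLike.star_def, Complex.mul_conj']
  exact_mod_cast hv

/-- Local process tomography (CPM case): if two ℂ-linear maps
`Φ, Ψ : Matrix (Fin n × Fin m) (Fin n × Fin m) ℂ →ₗ[ℂ] Matrix (Fin p × Fin q) (Fin p × Fin q) ℂ`
satisfy `Tr[(|v⟩⟨v| ⊗ₖ |w⟩⟨w|) * Φ(ρ ⊗ₖ σ)] = Tr[(|v⟩⟨v| ⊗ₖ |w⟩⟨w|) * Ψ(ρ ⊗ₖ σ)]` for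
all density matrices `ρ` on `ℂ^n`, `σ` on `ℂ^m` and all unit vectors `v : Fin p → ℂ`,
`w : Fin q → ℂ`, then `Φ = Ψ`: a process on a bipartite system is determined by its
generalized matrix elements with respect to product states and product effects. -/
theorem local_process_tomography
    (n m p q : ℕ)
    (Φ Ψ : Matrix (Fin n × Fin m) (Fin n × Fin m) ℂ
            →ₗ[ℂ] Matrix (Fin p × Fin q) (Fin p × Fin q) ℂ)
    (h : ∀ (ρ : Matrix (Fin n) (Fin n) ℂ) (σ : Matrix (Fin m) (Fin m) ℂ)
        (v : Fin p → ℂ) (w : Fin q → ℂ),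
      ρ.PosSemidef → ρ.trace = 1 → σ.PosSemidef → σ.trace = 1 →
      (∑ i, ‖v i‖ ^ 2 = 1) → (∑ i, ‖w i‖ ^ 2 = 1) →
      ((vecMulVec v (star v) ⊗ₖ vecMulVec w (star w)) * Φ (ρ ⊗ₖ σ)).trace
        = ((vecMulVec v (star v) ⊗ₖ vecMulVec w (star w)) * Ψ (ρ ⊗ₖ σ)).trace) :
    Φ = Ψ := by
  rw [← sub_eq_zero]
  set Δ := Φ - Ψ with hΔ
  have h0 : ∀ a b v w, (∑ i, ‖a i‖ ^ 2 = 1) → (∑ i, ‖b i‖ ^ 2 = 1) →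
      (∑ i, ‖v i‖ ^ 2 = 1) → (∑ i, ‖w i‖ ^ 2 = 1) →
      ((vecMulVec v (star v) ⊗ₖ vecMulVec w (star w)) *
        Δ (vecMulVec a (star a) ⊗ₖ vecMulVec b (star b))).trace = 0 := by
    intro a b v w ha hb hv hw
    rw [hΔ, LinearMap.sub_apply, Matrix.mul_sub, trace_sub, sub_eq_zero]
    exact h _ _ v w (lpt_dm a ha).1 (lpt_dm a ha).2 (lpt_dm b hb).1 (lpt_dm b hb).2 hv hw
  have h1 : ∀ A B C D, ((C ⊗ₖ D) * Δ (A ⊗ₖ B)).trace = 0 := by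
    intro A B C D
    refine lpt_aux (fun A => ((C ⊗ₖ D) * Δ (A ⊗ₖ B)).trace)
      ⟨fun x y => by simp [add_kronecker, Matrix.mul_add],
        fun c x => by simp [smul_kronecker]⟩ (fun a ha => ?_) A
    refine lpt_aux (fun B => ((C ⊗ₖ D) * Δ (vecMulVec a (star a) ⊗ₖ B)).trace)
      ⟨fun x y => by simp [kronecker_add, Matrix.mul_add],
        fun c x => by simp [kronecker_smul]⟩ (fun b hb => ?_) B
    refine lpt_aux (fun C => ((C ⊗ₖ D) * Δ (vecMulVec a (star a) ⊗ₖ vecMulVec b (star b))).trace)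
      ⟨fun x y => by simp [add_kronecker, Matrix.add_mul],
        fun c x => by simp [smul_kronecker]⟩ (fun v hv => ?_) C
    refine lpt_aux (fun D => ((vecMulVec v (star v) ⊗ₖ D) * Δ (vecMulVec a (star a) ⊗ₖ vecMulVec b (star b))).trace)
      ⟨fun x y => by simp [kronecker_add, Matrix.add_mul],
        fun c x => by simp [kronecker_smul]⟩ (fun w hw => ?_) D
    exact h0 a b v w ha hb hv hw
  have h2 : ∀ A B, Δ (A ⊗ₖ B) = 0 := by
    intro A B
    ext ⟨i, k⟩ ⟨j, l⟩
    have := h1 A B (single j i 1) (single l k 1)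
    rw [single_kronecker_single, trace_single_mul] at this
    simpa using this
  refine Matrix.ext_linearMap ℂ fun ⟨i, k⟩ ⟨j, l⟩ => LinearMap.ext_ring ?_
  have := h2 (single i j 1) (single k l 1)
  rw [single_kronecker_single] at this
  simpa using this
end

section
/- Adjustment lemma (ignored measurement on a discarded branch does not affect the other branch): let x : Matrix (Fin dU) (Fin dU) ℂ →ₗ[ℂ] Matrix (Fin dX) (Fin dX) ℂ be a trace-preserving linear map and let u : Matrix (Fin dU × Fin dV) (Fin dU × Fin dV) ℂ be any matrix. Then for every orthonormal basis (α_i) of Fin dX → ℂ, ∑_i Tr₁[(|α_i⟩⟨α_i| ⊗ₖ 1) * ((x ⊗ id)(u)) * (|α_i⟩⟨α_i| ⊗ₖ 1)] = Tr₁(u), where on the left Tr₁ is the partial trace over the Fin dX factor and on the right over the Fin dU factor. -/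
open Matrix Kronecker

/-- Partial trace over the first tensor factor:
`(ptrace₁ M) b b' = ∑ a, M (a, b) (a, b')`. -/
noncomputable def ptrace₁ {A B : Type} [Fintype A]
    (M : Matrix (A × B) (A × B) ℂ) : Matrix B B ℂ :=
  fun b b' => ∑ a, M (a, b) (a, b')

theorem ptrace₁_add' {A B : Type} [Fintype A] (M N : Matrix (A × B) (A × B) ℂ) :
    ptrace₁ (M + N) = ptrace₁ M + ptrace₁ N := by
  ext b b'
  simp [ptrace₁, Finset.sum_add_distrib]

theorem ptrace₁_kron {A B : Type} [Fintype A] (M : Matrix A A ℂ) (N : Matrix B B ℂ) :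
    ptrace₁ (M ⊗ₖ N) = M.trace • N := by
  ext b b'
  simp [ptrace₁, Matrix.trace, Finset.sum_mul]

theorem sum_proj_eq_one (d : ℕ) (α : Fin d → (Fin d → ℂ))
    (h : ∀ i j, ∑ k, starRingEnd ℂ (α i k) * α j k = if i = j then 1 else 0) :
    ∑ i, vecMulVec (α i) (star (α i)) = (1 : Matrix (Fin d) (Fin d) ℂ) := by
  have h1 : (Matrix.of fun i k => star (α i k)) * (Matrix.of fun k i => α i k)
      = (1 : Matrix (Fin d) (Fin d) ℂ) := by
    ext i j
    simpa [Matrix.mul_apply, Matrix.one_apply] using h i j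
  rw [← mul_eq_one_comm.mp h1]
  ext i j
  simp [Matrix.mul_apply, Matrix.sum_apply, vecMulVec_apply]

theorem proj_idem (d : ℕ) (v : Fin d → ℂ) (h : ∑ k, starRingEnd ℂ (v k) * v k = 1) :
    vecMulVec v (star v) * vecMulVec v (star v) = vecMulVec v (star v) := by
  have h' : star v ⬝ᵥ v = 1 := by simpa [dotProduct] using h
  rw [vecMulVec_mul_vecMulVec, h']
  simp

/-- Adjustment lemma (an ignored measurement on a discarded branch does
not affect the other branch): let `x` be a trace-preserving linear map from
`dU`-square matrices to `dX`-square matrices, `xI = x ⊗ id` the unique linear map on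
bipartite matrices with `(x ⊗ id)(A ⊗ₖ B) = x(A) ⊗ₖ B`, and `u` any matrix on the
`dU × dV` system. Then for every orthonormal basis `(α i)` of `Fin dX → ℂ`,
`∑ i, Tr₁[(|α i⟩⟨α i| ⊗ₖ 1) * ((x ⊗ id) u) * (|α i⟩⟨α i| ⊗ₖ 1)] = Tr₁ u`. -/
theorem adjustment_lemma
    (dU dV dX : ℕ)
    (x : Matrix (Fin dU) (Fin dU) ℂ →ₗ[ℂ] Matrix (Fin dX) (Fin dX) ℂ)
    (hx : ∀ M, (x M).trace = M.trace)
    (xI : Matrix (Fin dU × Fin dV) (Fin dU × Fin dV) ℂ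
           →ₗ[ℂ] Matrix (Fin dX × Fin dV) (Fin dX × Fin dV) ℂ)
    (hxI : ∀ (A : Matrix (Fin dU) (Fin dU) ℂ) (B : Matrix (Fin dV) (Fin dV) ℂ),
      xI (A ⊗ₖ B) = x A ⊗ₖ B)
    (u : Matrix (Fin dU × Fin dV) (Fin dU × Fin dV) ℂ)
    (α : Fin dX → (Fin dX → ℂ))
    (hα_orth : ∀ i j, ∑ k, starRingEnd ℂ (α i k) * α j k = if i = j then 1 else 0)
    (hα_span : Submodule.span ℂ (Set.range α) = ⊤) :
    ∑ i, ptrace₁ ((vecMulVec (α i) (star (α i)) ⊗ₖ (1 : Matrix (Fin dV) (Fin dV) ℂ))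
          * xI u
          * (vecMulVec (α i) (star (α i)) ⊗ₖ (1 : Matrix (Fin dV) (Fin dV) ℂ)))
      = ptrace₁ u := by
  induction u using Matrix.induction_on' with
  | h_zero =>
    ext b b'
    simp [ptrace₁, Matrix.sum_apply]
  | h_add p q hp hq =>
    simp only [map_add, mul_add, add_mul, ptrace₁_add', Finset.sum_add_distrib, hp, hq]
  | h_std_basis i j c =>
    obtain ⟨a, b⟩ := i
    obtain ⟨a', b'⟩ := j
    have hs : Matrix.single (a, b) (a', b') c
        = Matrix.single a a' c ⊗ₖ Matrix.single b b' (1 : ℂ) := by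
      rw [Matrix.single_kronecker_single, mul_one]
    rw [hs, hxI, ptrace₁_kron, ← hx]
    simp only [← Matrix.mul_kronecker_mul, one_mul, mul_one, ptrace₁_kron]
    rw [← Finset.sum_smul]
    congr 1
    have key : ∀ i, (vecMulVec (α i) (star (α i)) * x (Matrix.single a a' c)
        * vecMulVec (α i) (star (α i))).trace
        = (vecMulVec (α i) (star (α i)) * x (Matrix.single a a' c)).trace := by
      intro i
      rw [Matrix.trace_mul_comm, ← mul_assoc, proj_idem]
      simpa using hα_orth i i
    simp only [key]
    rw [← Matrix.trace_sum, ← Finset.sum_mul, sum_proj_eq_one dX α hα_orth, one_mul]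
end
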